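/- Assume (H1)–(H3), fix λ, μ with 0 < λ < Re λ* < ν < μ < (1+α)λ (α = min{1, r₁-2, r₂-2}), and set h_j(v) = J[f_j(φ+v) - f_j(φ) - Df_j(φ)v]. Then for j = 1,2 there exists a constant C independent of v and T such that for every sufficiently regular v, ‖∂_t h_j(v)‖_{L^{q_j',μ}_T L^{r_j'}} ≤ C( ‖v‖_{X_T}² + ‖v‖_{X_T}^{r_j-1} ), where ∂_t h_j(v(t)) = J[Df_j(φ+v(t)) - Df_j(φ)]∂_t v(t). -/

import Mathlib

open MeasureTheory ENNReal

noncomputable section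

/-- Euclidean space ℝ^N. -/
abbrev Rn (N : ℕ) := EuclideanSpace ℝ (Fin N)

variable {N : ℕ}

section BasicDefs

variable {G : Type} [NormedAddCommGroup G] [NormedSpace ℝ G]

/-- Pointwise Laplacian, defined via the second iterated Fréchet derivative. -/
def lap (f : Rn N → G) (x : Rn N) : G :=
  ∑ i : Fin N,
    iteratedFDeriv ℝ 2 f x ![EuclideanSpace.single i 1, EuclideanSpace.single i 1]

/-- Sobolev H^k norm (sum of L² norms of iterated derivatives up to order k). -/
def sobNorm (k : ℕ) (f : Rn N → G) : ℝ≥0∞ :=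
  ∑ i ∈ Finset.range (k + 1), eLpNorm (iteratedFDeriv ℝ i f) 2 volume

/-- (Strong) membership in the Sobolev space H^k. -/
def MemSobolev (k : ℕ) (f : Rn N → G) : Prop :=
  ContDiff ℝ (k : ℕ∞) f ∧ ∀ i ≤ k, MemLp (iteratedFDeriv ℝ i f) 2 volume

/-- L^q norm in time on (0,T) of an ℝ≥0∞-valued function. -/
def timeLp (q : ℝ≥0∞) (T : ℝ) (Φ : ℝ → ℝ≥0∞) : ℝ≥0∞ :=
  if q = ∞ then essSup Φ (volume.restrict (Set.Ioo 0 T))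
  else (∫⁻ t in Set.Ioo 0 T, Φ t ^ q.toReal) ^ (1 / q.toReal)

/-- ‖e^{-λ·}f‖_{L^q((0,T),L^r)}. -/
def twNorm (q r : ℝ≥0∞) (lam T : ℝ) (f : ℝ → Rn N → G) : ℝ≥0∞ :=
  timeLp q T (fun t => ENNReal.ofReal (Real.exp (-(lam * t))) * eLpNorm (f t) r volume)

/-- The weighted norm ‖f‖_{L^{q,λ}_T L^r} = e^{λT}‖e^{-λ·}f‖_{L^q((0,T),L^r)}. -/
def wNorm (q r : ℝ≥0∞) (lam T : ℝ) (f : ℝ → Rn N → G) : ℝ≥0∞ :=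
  ENNReal.ofReal (Real.exp (lam * T)) * twNorm q r lam T f

/-- The weighted norm ‖f‖_{L^{∞,λ}_T H²}. -/
def wNormH2 (lam T : ℝ) (f : ℝ → Rn N → G) : ℝ≥0∞ :=
  ENNReal.ofReal (Real.exp (lam * T)) *
    essSup (fun t => ENNReal.ofReal (Real.exp (-(lam * t))) * sobNorm 2 (f t))
      (volume.restrict (Set.Ioo 0 T))

/-- Pointwise time derivative of a time-dependent function. -/
def tderiv (v : ℝ → Rn N → G) : ℝ → Rn N → G :=
  fun t x => deriv (fun s => v s x) t

/-- The norm ‖v‖_{X_T} = ‖v‖_{L^{∞,λ}_T H²} + ‖∂ₜv‖_{L^{q₁,λ}_T L^{r₁}} + ‖∂ₜv‖_{L^{q₂,λ}_T L^{r₂}}. -/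
def XNorm (q₁ r₁ q₂ r₂ : ℝ≥0∞) (lam T : ℝ) (v : ℝ → Rn N → G) : ℝ≥0∞ :=
  wNormH2 lam T v + wNorm q₁ r₁ lam T (tderiv v) + wNorm q₂ r₂ lam T (tderiv v)

end BasicDefs

/-- A pair (q,r) is admissible: 2/q = N(1/2-1/r), 2 ≤ r ≤ 2N/(N-2)
(2 ≤ r < ∞ if N = 2, 2 ≤ r ≤ ∞ if N = 1), (q,r) ≠ (2,∞). -/
def Admissible (N : ℕ) (q r : ℝ≥0∞) : Prop :=
  2 ≤ r ∧ 2 / q = (N : ℝ≥0∞) * (1 / 2 - 1 / r) ∧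
    (3 ≤ N → r ≤ 2 * (N : ℝ≥0∞) / ((N : ℝ≥0∞) - 2)) ∧
    (N = 2 → r ≠ ∞) ∧ ¬(q = 2 ∧ r = ∞)

/-- Subcriticality: 1 < p < 2* - 1 with 2* = 2N/(N-2) for N ≥ 3 and 2* = ∞ for N = 1,2. -/
def Subcrit (N : ℕ) (p : ℝ) : Prop :=
  1 < p ∧ (3 ≤ N → p < 2 * (N : ℝ) / ((N : ℝ) - 2) - 1)

/-- The nonlinearity f(z) = -g(|z|²)z, identifying ℝ² with ℂ. -/
def fpot (g : ℝ → ℝ) : ℂ → ℂ :=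
  fun z => -((g (Complex.normSq z) : ℝ) : ℂ) * z

/-- The Hölder-type bound on the derivative required in (H1). -/
def H1bound (p : ℝ) (f : ℂ → ℂ) : Prop :=
  ContDiff ℝ 1 f ∧ f 0 = 0 ∧ fderiv ℝ f 0 = 0 ∧
    ∃ C : ℝ,
      (p ≤ 2 → ∀ z₁ z₂ : ℂ,
        ‖fderiv ℝ f z₁ - fderiv ℝ f z₂‖ ≤ C * ‖z₁ - z₂‖ ^ (p - 1)) ∧
      (2 < p → ∀ z₁ z₂ : ℂ,
        ‖fderiv ℝ f z₁ - fderiv ℝ f z₂‖ ≤ C * (‖z₁‖ ^ (p - 2) + ‖z₂‖ ^ (p - 2)) * ‖z₁ - z₂‖)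

/-- Hypothesis (H1). -/
structure H1full (N : ℕ) (g : ℝ → ℝ) (f₁ f₂ : ℂ → ℂ) (p₁ p₂ : ℝ) : Prop where
  gcont : ContinuousOn g (Set.Ici 0)
  hsum : ∀ z, fpot g z = f₁ z + f₂ z
  sub1 : Subcrit N p₁
  sub2 : Subcrit N p₂
  bd1 : H1bound p₁ f₁
  bd2 : H1bound p₂ f₂

/-- Hypothesis (H2): ω > 0 and φ ∈ H¹ is a nontrivial solution of -Δφ + ωφ - g(|φ|²)φ = 0. -/
def H2hyp (ω : ℝ) (g : ℝ → ℝ) (φ : Rn N → ℂ) : Prop :=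
  0 < ω ∧ φ ≠ 0 ∧ MemSobolev 1 φ ∧
    ∀ x, -(lap φ x) + (ω : ℂ) * φ x - ((g (Complex.normSq (φ x)) : ℝ) : ℂ) * φ x = 0

/-- The linearized operator A = JH acting on ℝ²-valued functions, in the identification
ℝ² ≅ ℂ (so that J is multiplication by -i). -/
def Aop (g : ℝ → ℝ) (ω : ℝ) (φ : Rn N → ℂ) (u : Rn N → ℂ) : Rn N → ℂ :=
  fun x => -Complex.I * (-(lap u x) + (ω : ℂ) * u x + fderiv ℝ (fpot g) (φ x) (u x))

/-- Complexification of a real-linear map on ℝ² ≅ ℂ, acting on ℂ². -/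
def cext (T : ℂ →L[ℝ] ℂ) (w : ℂ × ℂ) : ℂ × ℂ :=
  (((T 1).re : ℂ) * w.1 + ((T Complex.I).re : ℂ) * w.2,
   ((T 1).im : ℂ) * w.1 + ((T Complex.I).im : ℂ) * w.2)

/-- The complexified linearized operator A = J(H₀ + Df(φ)) acting on ℂ²-valued functions. -/
def AopC (g : ℝ → ℝ) (ω : ℝ) (φ : Rn N → ℂ) (u : Rn N → ℂ × ℂ) : Rn N → ℂ × ℂ :=
  fun x =>
    (-(lap (fun y => (u y).2) x) + (ω : ℂ) * (u x).2 +
        (cext (fderiv ℝ (fpot g) (φ x)) (u x)).2,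
     -(-(lap (fun y => (u y).1) x) + (ω : ℂ) * (u x).1 +
        (cext (fderiv ℝ (fpot g) (φ x)) (u x)).1))

/-- z is an eigenvalue of the (complexified) linearized operator A. -/
def IsEigen (g : ℝ → ℝ) (ω : ℝ) (φ : Rn N → ℂ) (z : ℂ) : Prop :=
  ∃ χ : Rn N → ℂ × ℂ, χ ≠ 0 ∧ MemSobolev 2 χ ∧ ∀ x, AopC g ω φ χ x = z • χ x

/-- Hypothesis (H3): A has an eigenvalue with positive real part. -/
def H3hyp (g : ℝ → ℝ) (ω : ℝ) (φ : Rn N → ℂ) : Prop :=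
  ∃ z : ℂ, 0 < z.re ∧ IsEigen g ω φ z

/-- u is a (global H¹) solution of i∂ₜu + Δu + g(|u|²)u = 0. -/
def IsNLS (g : ℝ → ℝ) (u : ℝ → Rn N → ℂ) : Prop :=
  (∀ t, MemSobolev 1 (u t)) ∧
    ∀ t x, HasDerivAt (fun s => u s x)
      (Complex.I * (lap (u t) x + ((g (Complex.normSq (u t x)) : ℝ) : ℂ) * u t x)) t

/-- Orbital stability of the standing wave e^{iωt}φ. -/
def OrbStable (g : ℝ → ℝ) (ω : ℝ) (φ : Rn N → ℂ) : Prop :=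
  ∀ ε : ℝ, 0 < ε → ∃ δ : ℝ, 0 < δ ∧
    ∀ u : ℝ → Rn N → ℂ, IsNLS g u →
      sobNorm 1 (fun x => u 0 x - φ x) < ENNReal.ofReal δ →
      ∀ t : ℝ, 0 ≤ t → ∃ (θ : ℝ) (y : Rn N),
        sobNorm 1 (fun x => u t x - Complex.exp (θ * Complex.I) * φ (x + y)) <
          ENNReal.ofReal ε

/-- h(v) = J[f(φ+v) - f(φ) - Df(φ)v] in the identification ℝ² ≅ ℂ. -/
def hfun (f : ℂ → ℂ) (φ v : Rn N → ℂ) : Rn N → ℂ :=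
  fun x => -Complex.I * (f (φ x + v x) - f (φ x) - fderiv ℝ f (φ x) (v x))

/-- ∂ₜ h(v) = J[Df(φ+v) - Df(φ)]∂ₜv. -/
def hderiv (f : ℂ → ℂ) (φ : Rn N → ℂ) (v : ℝ → Rn N → ℂ) : ℝ → Rn N → ℂ :=
  fun t x => -Complex.I * ((fderiv ℝ f (φ x + v t x) - fderiv ℝ f (φ x)) (tderiv v t x))

/-- v is a (global H²) solution of ∂ₜv = Av + h(v). -/
def IsLinSol (g : ℝ → ℝ) (ω : ℝ) (φ : Rn N → ℂ) (v : ℝ → Rn N → ℂ) : Prop :=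
  (∀ t, MemSobolev 2 (v t)) ∧
    ∀ t x, HasDerivAt (fun s => v s x)
      (Aop g ω φ (v t) x + hfun (fpot g) φ (v t) x) t

/-- The operator A = JH₀ + V with a bounded 2×2 matrix potential V,
acting on ℂ²-valued functions. -/
def AVop (ω : ℝ) (V : Rn N → Matrix (Fin 2) (Fin 2) ℝ) (u : Rn N → ℂ × ℂ) :
    Rn N → ℂ × ℂ :=
  fun x =>
    ((-(lap (fun y => (u y).2) x) + (ω : ℂ) * (u x).2) +
        ((V x 0 0 : ℝ) : ℂ) * (u x).1 + ((V x 0 1 : ℝ) : ℂ) * (u x).2,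
     (-(-(lap (fun y => (u y).1) x) + (ω : ℂ) * (u x).1)) +
        ((V x 1 0 : ℝ) : ℂ) * (u x).1 + ((V x 1 1 : ℝ) : ℂ) * (u x).2)

/-- V is a bounded (L^∞) matrix potential. -/
def VBounded (V : Rn N → Matrix (Fin 2) (Fin 2) ℝ) : Prop :=
  (∀ i j, Measurable fun x => V x i j) ∧ ∃ M : ℝ, ∀ x i j, |V x i j| ≤ M

/-- S is the strongly continuous group on L² generated by the operator L. -/
structure IsEvolGroupC (L : (Rn N → ℂ × ℂ) → (Rn N → ℂ × ℂ))
    (S : ℝ → (Rn N → ℂ × ℂ) → (Rn N → ℂ × ℂ)) : Prop where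
  zero : ∀ u, S 0 u = u
  comp : ∀ s t u, S (s + t) u = S s (S t u)
  lin : ∀ (t : ℝ) (a : ℂ) (u v : Rn N → ℂ × ℂ),
    S t (fun x => a • u x + v x) = fun x => a • S t u x + S t v x
  cont : ∀ u, MemLp u 2 volume → ∀ t₀ : ℝ,
    Filter.Tendsto (fun t => eLpNorm (fun x => S t u x - S t₀ u x) 2 volume)
      (nhds t₀) (nhds 0)
  gen : ∀ u, MemSobolev 2 u → ∀ t : ℝ,
    MemSobolev 2 (S t u) ∧ ∀ x, HasDerivAt (fun s => S s u x) (L (S t u) x) t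

/-- Γ[f](t) = ∫₀ᵗ e^{(t-s)A} f(s) ds. -/
def Gamma (S : ℝ → (Rn N → ℂ × ℂ) → (Rn N → ℂ × ℂ)) (f : ℝ → Rn N → ℂ × ℂ)
    (t : ℝ) : Rn N → ℂ × ℂ :=
  fun x => ∫ s in (0:ℝ)..t, S (t - s) (f s) x

/-- α = min{1, r₁-2, r₂-2}. -/
def alphaConst (r₁ r₂ : ℝ) : ℝ := min 1 (min (r₁ - 2) (r₂ - 2))

/-- Real part of a ℂ²-valued function, as an element of the real space L²(ℝ^N,ℝ²) ≅ L²(ℝ^N,ℂ). -/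
def reChi (χ : Rn N → ℂ × ℂ) : Rn N → ℂ :=
  fun x => ((χ x).1.re : ℂ) + ((χ x).2.re : ℂ) * Complex.I

/-- The constant k = 1 if Im λ* = 0, k = exp(2π Re λ*/|Im λ*|) otherwise. -/
def kconst (lam : ℂ) : ℝ :=
  if lam.im = 0 then 1 else Real.exp (2 * Real.pi * lam.re / |lam.im|)

/-- The defining property of T_δ:
log(ε₀/(kδ)) ≤ Re λ* T_δ ≤ log(ε₀/δ) and Im λ* T_δ ∈ 2πℤ. -/
def TdeltaProp (lam : ℂ) (ε₀ δ T : ℝ) : Prop :=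
  Real.log (ε₀ / (kconst lam * δ)) ≤ lam.re * T ∧
    lam.re * T ≤ Real.log (ε₀ / δ) ∧ ∃ n : ℤ, lam.im * T = 2 * Real.pi * (n : ℝ)

/-- The real L² inner product on L²(ℝ^N,ℝ²) in the identification ℝ² ≅ ℂ. -/
def realL2inner (u v : Rn N → ℂ) : ℝ :=
  ∫ x, ((starRingEnd ℂ) (u x) * v x).re

/-- The L² inner product for ℂ²-valued functions. -/
def l2innerC2 (u v : Rn N → ℂ × ℂ) : ℂ :=
  ∫ x, ((starRingEnd ℂ) (u x).1 * (v x).1 + (starRingEnd ℂ) (u x).2 * (v x).2)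

section Resolvent

variable {G : Type} [NormedAddCommGroup G] [NormedSpace ℂ G]

/-- z belongs to the resolvent set of the operator L with domain `dom`:
there is a bounded everywhere-defined inverse of z - L mapping L² into the domain. -/
def InResSet (L : (Rn N → G) → (Rn N → G)) (dom : (Rn N → G) → Prop) (z : ℂ) : Prop :=
  ∃ R : (Rn N → G) → (Rn N → G),
    (∀ (a : ℂ) (u v : Rn N → G), R (fun x => a • u x + v x) = fun x => a • R u x + R v x) ∧
    (∀ u, MemLp u 2 volume → dom (R u)) ∧
    (∀ u, MemLp u 2 volume → ∀ x, z • R u x - L (R u) x = u x) ∧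
    (∀ u, dom u → ∀ x, R (fun y => z • u y - L u y) x = u x) ∧
    ∃ M : ℝ, ∀ u, eLpNorm (R u) 2 volume ≤ ENNReal.ofReal M * eLpNorm u 2 volume

/-- The spectrum of the operator L with domain `dom`. -/
def specSet (L : (Rn N → G) → (Rn N → G)) (dom : (Rn N → G) → Prop) : Set ℂ :=
  {z | ¬ InResSet L dom z}

end Resolvent

/-- z belongs to the essential spectrum of A (Weyl singular sequence characterization). -/
def InEssSpec (g : ℝ → ℝ) (ω : ℝ) (φ : Rn N → ℂ) (z : ℂ) : Prop :=
  ∃ u : ℕ → Rn N → ℂ × ℂ,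
    (∀ n, MemSobolev 2 (u n)) ∧ (∀ n, eLpNorm (u n) 2 volume = 1) ∧
    Filter.Tendsto
      (fun n => eLpNorm (fun x => AopC g ω φ (u n) x - z • u n x) 2 volume)
      Filter.atTop (nhds 0) ∧
    ∀ w : Rn N → ℂ × ℂ, MemLp w 2 volume →
      Filter.Tendsto (fun n => l2innerC2 (u n) w) Filter.atTop (nhds 0)

/-- The operator D = -Δ + ω acting on complex-valued functions. -/
def Dop (ω : ℝ) (u : Rn N → ℂ) : Rn N → ℂ :=
  fun x => -(lap u x) + (ω : ℂ) * u x

/-- The operator L(ξ) = [[ξ, -D],[D, ξ]]. -/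
def Lxi (ω : ℝ) (ξ : ℂ) (u : Rn N → ℂ × ℂ) : Rn N → ℂ × ℂ :=
  fun x => (ξ * (u x).1 - Dop ω (fun y => (u y).2) x,
            Dop ω (fun y => (u y).1) x + ξ * (u x).2)

/-- φ is a weak H¹ solution of -Δφ + ωφ - g(|φ|²)φ = 0. -/
def WeakH1Sol (ω : ℝ) (g : ℝ → ℝ) (φ : Rn N → ℂ) : Prop :=
  MemLp φ 2 volume ∧ Differentiable ℝ φ ∧ MemLp (fderiv ℝ φ) 2 volume ∧
    ∀ ψ : Rn N → ℂ, ContDiff ℝ (⊤ : ℕ∞) ψ → HasCompactSupport ψ →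
      ((∫ x, ∑ i : Fin N,
          fderiv ℝ φ x (EuclideanSpace.single i 1) *
            fderiv ℝ ψ x (EuclideanSpace.single i 1)) +
        (∫ x, (ω : ℂ) * φ x * ψ x) -
        ∫ x, ((g (Complex.normSq (φ x)) : ℝ) : ℂ) * φ x * ψ x) = 0

end

noncomputable section

/-- The power nonlinearity f(z) = -|z|^{p-1} z on ℝ² ≅ ℂ. -/
def fpow (p : ℝ) : ℂ → ℂ := fun z => -((‖z‖ ^ (p - 1) : ℝ) : ℂ) * z

end

/-! The estimate is Hölder's inequality in space and then in time. In space, (H1) bounds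
`Df(φ + v) - Df(φ)` by `|v|^{p-1}`, plus `|φ|^{p-2}|v|` when `p > 2`, which lies in
`L^{(p+1)/(p-1)}` as soon as `φ` and `v` lie in `L^{p+1}`; multiplying by `∂ₜv ∈ L^{p+1}` lands in
the dual space of `L^{p+1}`. Subcriticality of `p` enters through the embedding `H¹ ⊂ L^{p+1}`,
which is the Gagliardo–Nirenberg inequality if `N ≥ 3`. If `N ≤ 2`, an inequality
`‖w‖_q ≤ D ‖∇w‖_r` is applied to `w = u²`: Gagliardo–Nirenberg doubles the exponent repeatedly if
`N = 2`, and the fundamental theorem of calculus reaches `L^∞` at once if `N = 1`.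

In time, put `κ = min (2λ) (pλ) - μ > 0`. The factor `‖v‖ + ‖v‖^{p-1}` gains enough decay that the
weighted dual norm of the product is controlled by `e^{-κ(T-t)}` times the weighted norm of `∂ₜv`.
The weight `e^{-κ(T-t)}` is bounded in every `L^s(0, T)` uniformly in `T`, so it takes `L^q` to
`L^{q'}` because `q ≥ 2`. -/

section LebesgueNorms

variable {α : Type*} [MeasurableSpace α] {ν : Measure α} {p q r : ℝ≥0∞}

lemma eLpNorm_const_mul_ennreal {c : ℝ≥0∞} (hc : c ≠ ∞) (G : α → ℝ≥0∞) :
    eLpNorm (fun x => c * G x) r ν = c * eLpNorm G r ν := by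
  rcases eq_or_ne r 0 with rfl | hr0
  · simp
  rcases eq_or_ne r ∞ with rfl | hrt
  · exact ENNReal.essSup_const_mul
  have hr : 0 < r.toReal := ENNReal.toReal_pos hr0 hrt
  simp only [eLpNorm_eq_lintegral_rpow_enorm_toReal hr0 hrt, enorm_eq_self,
    ENNReal.mul_rpow_of_nonneg _ _ hr.le]
  rw [lintegral_const_mul' _ _ (ENNReal.rpow_ne_top_of_nonneg hr.le hc),
    ENNReal.mul_rpow_of_nonneg _ _ (by positivity), ← ENNReal.rpow_mul,
    mul_one_div_cancel hr.ne', ENNReal.rpow_one]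

lemma eLpNorm_mul_le_essSup_mul_eLpNorm (F : α → ℝ≥0∞) {G : α → ℝ≥0∞} (hG : AEMeasurable G ν) :
    eLpNorm (fun x => F x * G x) r ν ≤ essSup F ν * eLpNorm G r ν := by
  rcases eq_or_ne r 0 with rfl | hr
  · simp
  rcases eq_or_ne (eLpNorm G r ν) 0 with h0 | h0
  · refine (eLpNorm_mono_enorm_ae (g := G) ?_).trans (h0.le.trans zero_le)
    filter_upwards [(eLpNorm_eq_zero_iff hG.aestronglyMeasurable hr).1 h0] with x hx
    simp [hx]
  rcases eq_or_ne (essSup F ν) ∞ with ht | ht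
  · simp [ht, ENNReal.top_mul h0]
  rw [← eLpNorm_const_mul_ennreal ht]
  refine eLpNorm_mono_enorm_ae ?_
  filter_upwards [ENNReal.ae_le_essSup F] with x hx
  simpa only [enorm_eq_self] using mul_le_mul_left hx (G x)

lemma eLpNorm_mul_le_of_aemeasurable [HolderTriple p q r] {F G : α → ℝ≥0∞}
    (hF : AEMeasurable F ν) (hG : AEMeasurable G ν) :
    eLpNorm (fun x => F x * G x) r ν ≤ eLpNorm F p ν * eLpNorm G q ν := by
  rcases eq_or_ne r 0 with rfl | hr
  · simp
  rcases eq_or_ne p ∞ with rfl | hpt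
  · obtain rfl : r = q := HolderTriple.unique ∞ q r q
    exact eLpNorm_mul_le_essSup_mul_eLpNorm F hG
  rcases eq_or_ne q ∞ with rfl | hqt
  · obtain rfl : r = p := HolderTriple.unique p ∞ r p
    simp_rw [mul_comm (F _), mul_comm (eLpNorm F r ν)]
    exact eLpNorm_mul_le_essSup_mul_eLpNorm G hF
  have hrp : r ≤ p := HolderTriple.le p q r
  have hrq : r ≤ q := HolderTriple.le q p r
  have hp : p ≠ 0 := (hr.bot_lt.trans_le hrp).ne'
  have hq : q ≠ 0 := (hr.bot_lt.trans_le hrq).ne'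
  have hpqr' := HolderTriple.toReal r (ENNReal.toReal_pos hp hpt) (ENNReal.toReal_pos hq hqt)
  simp only [eLpNorm_eq_lintegral_rpow_enorm_toReal, hp, hpt, hq, hqt, hr,
    ne_top_of_le_ne_top hpt hrp, ne_eq, not_false_eq_true, enorm_eq_self]
  exact ENNReal.lintegral_Lp_mul_le_Lq_mul_Lr hpqr'.pos' hpqr'.lt hpqr'.one_div_eq ν hF hG

lemma exists_aemeasurable_le_eLpNorm_mul_eq {F : α → ℝ≥0∞} (hF : AEMeasurable F ν)
    (hFt : ∀ x, F x ≠ ∞) (G : α → ℝ≥0∞) (hr₀ : r ≠ 0) (hrt : r ≠ ∞) :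
    ∃ G' ≤ G, AEMeasurable G' ν ∧
      eLpNorm (fun x => F x * G x) r ν = eLpNorm (fun x => F x * G' x) r ν := by
  have hr : 0 < r.toReal := ENNReal.toReal_pos hr₀ hrt
  obtain ⟨h, hm, hle, heq⟩ :=
    exists_measurable_le_lintegral_eq (μ := ν) fun x => (F x * G x) ^ r.toReal
  have hle' (x) : h x ^ r.toReal⁻¹ ≤ F x * G x := by
    rw [ENNReal.rpow_inv_le_iff hr]
    exact hle x
  refine ⟨fun x => h x ^ r.toReal⁻¹ / F x, fun x => ENNReal.div_le_of_le_mul' (hle' x),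
    (hm.pow_const _).aemeasurable.div hF, ?_⟩
  have hcancel (x) : F x * (h x ^ r.toReal⁻¹ / F x) = h x ^ r.toReal⁻¹ := by
    refine ENNReal.mul_div_cancel' (fun h₀ => ?_) (fun ht => (hFt x ht).elim)
    simpa [h₀] using hle' x
  simp only [hcancel, eLpNorm_eq_lintegral_rpow_enorm_toReal hr₀ hrt, enorm_eq_self,
    ENNReal.rpow_inv_rpow hr.ne', heq]

/- `∫⁻` is a supremum over measurable minorants, so `G` can be replaced by a measurable `G' ≤ G`. -/
lemma eLpNorm_mul_le_eLpNorm_mul_eLpNorm [HolderTriple p q r] {F : α → ℝ≥0∞}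
    (hF : AEMeasurable F ν) (hFt : ∀ x, F x ≠ ∞) (G : α → ℝ≥0∞) :
    eLpNorm (fun x => F x * G x) r ν ≤ eLpNorm F p ν * eLpNorm G q ν := by
  rcases eq_or_ne r 0 with rfl | hr₀
  · simp
  rcases eq_or_ne r ∞ with rfl | hrt
  · obtain rfl : p = ∞ := top_unique (HolderTriple.le p q ∞)
    obtain rfl : q = ∞ := top_unique (HolderTriple.le q ∞ ∞)
    exact ENNReal.essSup_mul_le F G
  obtain ⟨G', hle, hG', heq⟩ := exists_aemeasurable_le_eLpNorm_mul_eq hF hFt G hr₀ hrt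
  rw [heq]
  refine (eLpNorm_mul_le_of_aemeasurable (p := p) (q := q) hF hG').trans ?_
  gcongr
  exact eLpNorm_mono_enorm fun x => hle x

lemma eLpNorm_le_rpow_eLpNorm_mul_rpow_eLpNorm {E : Type*} [NormedAddCommGroup E] {u : α → E}
    (hu : AEStronglyMeasurable u ν) {a b : ℝ} (ha : 0 < a) (hb : 0 < b) (hab : a + b = 1)
    (h : ENNReal.ofReal a / p + ENNReal.ofReal b / q = r⁻¹) :
    eLpNorm u r ν ≤ eLpNorm u p ν ^ a * eLpNorm u q ν ^ b := by
  have ha' : ENNReal.ofReal a ≠ 0 := by simpa using ha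
  have hb' : ENNReal.ofReal b ≠ 0 := by simpa using hb
  have : HolderTriple (p / ENNReal.ofReal a) (q / ENNReal.ofReal b) r := by
    refine ⟨?_⟩
    rwa [ENNReal.inv_div (.inl ofReal_ne_top) (.inl ha'),
      ENNReal.inv_div (.inl ofReal_ne_top) (.inl hb')]
  calc eLpNorm u r ν = eLpNorm (fun x => ‖u x‖ₑ ^ a * ‖u x‖ₑ ^ b) r ν := by
        simp_rw [← ENNReal.rpow_add_of_nonneg _ _ ha.le hb.le, hab, ENNReal.rpow_one,
          eLpNorm_enorm]
    _ ≤ eLpNorm (‖u ·‖ₑ ^ a) (p / ENNReal.ofReal a) ν *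
          eLpNorm (‖u ·‖ₑ ^ b) (q / ENNReal.ofReal b) ν :=
        eLpNorm_mul_le_eLpNorm_mul_eLpNorm (hu.enorm.pow_const a) (fun x => by simp [ha.le]) _
    _ = eLpNorm u p ν ^ a * eLpNorm u q ν ^ b := by
        rw [eLpNorm_enorm_rpow u ha, eLpNorm_enorm_rpow u hb,
          ENNReal.div_mul_cancel ha' ofReal_ne_top, ENNReal.div_mul_cancel hb' ofReal_ne_top]

lemma eLpNorm_le_max_eLpNorm {E : Type*} [NormedAddCommGroup E] {u : α → E}
    (hu : AEStronglyMeasurable u ν) (hp : p ≠ 0) (hpr : p ≤ r) (hrq : r ≤ q) :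
    eLpNorm u r ν ≤ max (eLpNorm u p ν) (eLpNorm u q ν) := by
  rcases hpr.eq_or_lt with rfl | hpr
  · exact le_max_left _ _
  rcases hrq.eq_or_lt with rfl | hrq
  · exact le_max_right _ _
  have hpt : p⁻¹ ≠ ∞ := ENNReal.inv_ne_top.2 hp
  have hrt : r⁻¹ ≠ ∞ := ne_top_of_le_ne_top hpt (ENNReal.inv_le_inv.2 hpr.le)
  have hqt : q⁻¹ ≠ ∞ := ne_top_of_le_ne_top hrt (ENNReal.inv_le_inv.2 hrq.le)
  obtain ⟨b, a, hb, ha, hba, h⟩ : r⁻¹.toReal ∈ openSegment ℝ q⁻¹.toReal p⁻¹.toReal := by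
    have hqr := (ENNReal.toReal_lt_toReal hqt hrt).2 (ENNReal.inv_lt_inv.2 hrq)
    have hrp := (ENNReal.toReal_lt_toReal hrt hpt).2 (ENNReal.inv_lt_inv.2 hpr)
    rw [openSegment_eq_Ioo (hqr.trans hrp)]
    exact ⟨hqr, hrp⟩
  have hr : ENNReal.ofReal a / p + ENNReal.ofReal b / q = r⁻¹ := by
    rw [← ENNReal.ofReal_toReal hrt, ← h, add_comm, smul_eq_mul, smul_eq_mul,
      ENNReal.ofReal_add (by positivity) (by positivity), ENNReal.ofReal_mul hb.le,
      ENNReal.ofReal_mul ha.le, ENNReal.ofReal_toReal hqt, ENNReal.ofReal_toReal hpt]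
    rfl
  set M := max (eLpNorm u p ν) (eLpNorm u q ν)
  calc eLpNorm u r ν ≤ eLpNorm u p ν ^ a * eLpNorm u q ν ^ b :=
        eLpNorm_le_rpow_eLpNorm_mul_rpow_eLpNorm hu ha hb (by linarith) hr
    _ ≤ M ^ a * M ^ b := by gcongr <;> simp [M]
    _ = M := by rw [← ENNReal.rpow_add_of_nonneg _ _ ha.le hb.le, add_comm, hba, ENNReal.rpow_one]

end LebesgueNorms

section SobolevNorm

variable {N : ℕ} {G : Type} [NormedAddCommGroup G] [NormedSpace ℝ G]

lemma sobNorm_mono (u : Rn N → G) : Monotone fun k => sobNorm k u := fun _ _ hkl =>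
  Finset.sum_le_sum_of_subset (Finset.range_mono (Nat.succ_le_succ hkl))

lemma sobNorm_one (u : Rn N → G) :
    sobNorm 1 u = eLpNorm u 2 volume + eLpNorm (fderiv ℝ u) 2 volume := by
  have h₀ : eLpNorm (iteratedFDeriv ℝ 0 u) 2 volume = eLpNorm u 2 volume :=
    eLpNorm_congr_norm_ae (.of_forall fun x => by simp)
  have h₁ : eLpNorm (iteratedFDeriv ℝ 1 u) 2 volume = eLpNorm (fderiv ℝ u) 2 volume :=
    eLpNorm_congr_norm_ae (.of_forall fun x => norm_iteratedFDeriv_one _)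
  simp [sobNorm, Finset.sum_range_succ, h₀, h₁]

lemma eLpNorm_two_le_sobNorm_one (u : Rn N → G) : eLpNorm u 2 volume ≤ sobNorm 1 u :=
  le_self_add.trans (sobNorm_one u).ge

lemma eLpNorm_fderiv_two_le_sobNorm_one (u : Rn N → G) :
    eLpNorm (fderiv ℝ u) 2 volume ≤ sobNorm 1 u :=
  le_add_self.trans (sobNorm_one u).ge

lemma MemSobolev.sobNorm_ne_top {k : ℕ} {u : Rn N → G} (hu : MemSobolev k u) :
    sobNorm k u ≠ ∞ :=
  ENNReal.sum_ne_top.2 fun i hi => (hu.2 i (Finset.mem_range_succ_iff.1 hi)).eLpNorm_ne_top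

end SobolevNorm

section SobolevInequality

open scoped NNReal

variable {N : ℕ}

/-- The embedding `H¹(ℝᴺ) ⊂ Lʳ(ℝᴺ)`, tested on compactly supported `C¹` functions only; the
support condition is removed in `SobolevInequality.exists_of_contDiff`. -/
def SobolevInequality (N : ℕ) (r : ℝ≥0∞) : Prop :=
  ∃ K : ℝ≥0, ∀ u : Rn N → ℂ, ContDiff ℝ 1 u → HasCompactSupport u →
    eLpNorm u r volume ≤ K * sobNorm 1 u

lemma SobolevInequality.two : SobolevInequality N 2 :=
  ⟨1, fun u _ _ => by simpa using eLpNorm_two_le_sobNorm_one u⟩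

lemma SobolevInequality.of_le {r s : ℝ≥0∞} (hs : SobolevInequality N s) (hr : 2 ≤ r)
    (hrs : r ≤ s) : SobolevInequality N r := by
  obtain ⟨K, hK⟩ := hs
  refine ⟨max 1 K, fun u hu hc => ?_⟩
  refine (eLpNorm_le_max_eLpNorm hu.continuous.aestronglyMeasurable two_ne_zero hr hrs).trans
    (max_le ?_ ((hK u hu hc).trans ?_))
  · calc eLpNorm u 2 volume ≤ (1 : ℝ≥0) * sobNorm 1 u := by
          simpa using eLpNorm_two_le_sobNorm_one u
      _ ≤ (max 1 K : ℝ≥0) * sobNorm 1 u := by gcongr; exact le_max_left 1 K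
  · gcongr
    exact le_max_right 1 K

lemma eLpNorm_sq (u : Rn N → ℂ) (q : ℝ≥0∞) :
    eLpNorm (fun x => u x ^ 2) q volume = eLpNorm u (q * 2) volume ^ 2 := by
  have h := eLpNorm_norm_rpow (μ := (volume : Measure (Rn N))) (p := q) u two_pos
  rw [← eLpNorm_norm]
  simpa using h

lemma eLpNorm_fderiv_sq_le {p r : ℝ≥0∞} [HolderTriple p 2 r] {u : Rn N → ℂ}
    (hu : ContDiff ℝ 1 u) :
    eLpNorm (fderiv ℝ fun x => u x ^ 2) r volume ≤
      2 * eLpNorm u p volume * eLpNorm (fderiv ℝ u) 2 volume := by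
  have hderiv : (fderiv ℝ fun x => u x ^ 2) = fun x => (2 * u x) • fderiv ℝ u x := by
    ext x y
    simp [((hu.differentiable one_ne_zero x).hasFDerivAt.pow 2).fderiv]
  rw [hderiv]
  exact eLpNorm_le_eLpNorm_mul_eLpNorm_of_nnnorm hu.continuous.aestronglyMeasurable
    (hu.continuous_fderiv one_ne_zero).aestronglyMeasurable (fun z L => (2 * z) • L) 2
    (.of_forall fun x => by simp [nnnorm_smul])

/- Applying a first-order inequality `‖w‖_q ≤ D ‖∇w‖_r` to `w = u²`, whose gradient `2u∇u` is
controlled by Hölder with `1/r = 1/p + 1/2`. -/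
lemma SobolevInequality.of_sq {p q r : ℝ≥0∞} [HolderTriple p 2 r] (hp : SobolevInequality N p)
    {D : ℝ≥0} (hD : ∀ w : Rn N → ℂ, ContDiff ℝ 1 w → HasCompactSupport w →
      eLpNorm w q volume ≤ D * eLpNorm (fderiv ℝ w) r volume) :
    SobolevInequality N (q * 2) := by
  obtain ⟨K, hK⟩ := hp
  refine ⟨NNReal.sqrt (2 * D * K), fun u hu hc => ?_⟩
  rw [← ENNReal.pow_le_pow_left_iff two_ne_zero]
  calc eLpNorm u (q * 2) volume ^ 2 = eLpNorm (fun x => u x ^ 2) q volume := (eLpNorm_sq u q).symm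
    _ ≤ D * eLpNorm (fderiv ℝ fun x => u x ^ 2) r volume :=
        hD _ (hu.pow 2) (hc.comp_left (g := (· ^ 2)) (by simp))
    _ ≤ D * (2 * (K * sobNorm 1 u) * sobNorm 1 u) := by
        gcongr
        refine (eLpNorm_fderiv_sq_le (p := p) hu).trans ?_
        gcongr
        exacts [hK u hu hc, eLpNorm_fderiv_two_le_sobNorm_one u]
    _ = (NNReal.sqrt (2 * D * K) ^ 2 : ℝ≥0) * sobNorm 1 u ^ 2 := by
        rw [NNReal.sq_sqrt]
        push_cast
        ring
    _ = (NNReal.sqrt (2 * D * K) * sobNorm 1 u) ^ 2 := by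
        rw [mul_pow, ENNReal.coe_pow]

lemma SobolevInequality.of_three_le (hN : 3 ≤ N) :
    SobolevInequality N (ENNReal.ofReal (2 * N / (N - 2))) := by
  have hN' : (3 : ℝ) ≤ N := by exact_mod_cast hN
  have hN₂ : (0 : ℝ) < N - 2 := by linarith
  refine ⟨SNormLESNormFDerivOfEqConst ℂ (volume : Measure (Rn N)) 2, fun u hu hc => ?_⟩
  refine (eLpNorm_le_eLpNorm_fderiv_of_eq (volume : Measure (Rn N)) hu hc (p := 2)
    (p' := (2 * (N : ℝ) / (N - 2)).toNNReal) one_le_two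
    (finrank_euclideanSpace_fin.trans_gt (by omega)) ?_).trans ?_
  · rw [Real.coe_toNNReal _ (by positivity), finrank_euclideanSpace_fin]
    push_cast
    field_simp
  · refine mul_le_mul_right ?_ _
    exact eLpNorm_fderiv_two_le_sobNorm_one u

lemma SobolevInequality.mul_two_of_dim_two {p : ℝ≥0} (hp : 2 ≤ p) (h : SobolevInequality 2 p) :
    SobolevInequality 2 (p * 2) := by
  have hp₀ : 0 < p := two_pos.trans_le hp
  set r : ℝ≥0 := 2 * p / (2 + p) with hr
  have hpr : NNReal.HolderTriple p 2 r := ⟨by rw [hr]; field_simp, hp₀, two_pos⟩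
  have hr₁ : 1 ≤ r := by
    rw [hr, one_le_div (by positivity), two_mul]
    gcongr
  have hDim : (p : ℝ)⁻¹ = (r : ℝ)⁻¹ - (Module.finrank ℝ (Rn 2) : ℝ)⁻¹ := by
    rw [hr, finrank_euclideanSpace_fin]
    push_cast
    field_simp
    ring
  have : HolderTriple (p : ℝ≥0∞) 2 r := hpr.coe_ennreal (one_pos.trans_le hr₁).ne'
  exact h.of_sq fun w hw hc => eLpNorm_le_eLpNorm_fderiv_of_eq volume hw hc hr₁ (by simp) hDim

lemma SobolevInequality.of_dim_two {r : ℝ≥0∞} (hr : 2 ≤ r) (hrt : r ≠ ∞) :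
    SobolevInequality 2 r := by
  have hpow (k : ℕ) : SobolevInequality 2 (2 ^ (k + 1)) := by
    induction k with
    | zero => simpa using two
    | succ k ih =>
      rw [pow_succ]
      exact_mod_cast mul_two_of_dim_two (p := 2 ^ (k + 1)) (le_self_pow₀ one_le_two k.succ_ne_zero)
        (by exact_mod_cast ih)
  lift r to ℝ≥0 using hrt
  obtain ⟨k, hk⟩ := pow_unbounded_of_one_lt r one_lt_two
  exact (hpow k).of_le hr (by exact_mod_cast hk.le.trans (pow_le_pow_right₀ one_le_two k.le_succ))

end SobolevInequality

section DimensionOne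

variable {E F : Type*} [NormedAddCommGroup E] [InnerProductSpace ℝ E] [FiniteDimensional ℝ E]
  [MeasurableSpace E] [BorelSpace E] [NormedAddCommGroup F] [NormedSpace ℝ F]

lemma enorm_le_eLpNorm_fderiv_one (e : ℝ ≃ₗᵢ[ℝ] E) {w : E → F} (hw : ContDiff ℝ 1 w)
    (hc : HasCompactSupport w) (x : E) : ‖w x‖ₑ ≤ eLpNorm (fderiv ℝ w) 1 volume := by
  have hderiv (s : ℝ) : ‖deriv (w ∘ e) s‖ₑ ≤ ‖fderiv ℝ w (e s)‖ₑ := by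
    have hs := ((hw.differentiable one_ne_zero (e s)).hasFDerivAt.comp_hasDerivAt s
      e.toContinuousLinearEquiv.hasDerivAt).deriv
    have h₁ : ‖e 1‖ₑ = 1 := by simp [← ofReal_norm]
    rw [hs]
    simpa [h₁] using (fderiv ℝ w (e s)).le_opENorm (e 1)
  calc ‖w x‖ₑ = ‖(w ∘ e) (e.symm x)‖ₑ := by simp
    _ ≤ ∫⁻ s in Set.Iic (e.symm x), ‖deriv (w ∘ e) s‖ₑ :=
        HasCompactSupport.enorm_le_lintegral_Ici_deriv (hw.comp e.contDiff)
          (hc.comp_homeomorph e.toHomeomorph) _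
    _ ≤ ∫⁻ s, ‖fderiv ℝ w (e s)‖ₑ :=
        (setLIntegral_le_lintegral _ _).trans (lintegral_mono hderiv)
    _ = eLpNorm (fderiv ℝ w) 1 volume := by
        rw [eLpNorm_one_eq_lintegral_enorm,
          ← e.measurePreserving.lintegral_comp_emb e.toHomeomorph.measurableEmbedding]

end DimensionOne

lemma SobolevInequality.of_dim_one {r : ℝ≥0∞} (hr : 2 ≤ r) : SobolevInequality 1 r := by
  let e : ℝ ≃ₗᵢ[ℝ] Rn 1 := (OrthonormalBasis.singleton (Fin 1) ℝ).repr
  have htop : SobolevInequality 1 (∞ * 2) := two.of_sq (D := 1) fun w hw hc => by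
    simpa using eLpNormEssSup_le_of_ae_enorm_bound
      (.of_forall fun x => enorm_le_eLpNorm_fderiv_one e hw hc x)
  exact htop.of_le hr (by simp)

lemma Subcrit.sobolevInequality {N : ℕ} {p : ℝ} (hp : Subcrit N p) (hN : 1 ≤ N) :
    SobolevInequality N (ENNReal.ofReal (p + 1)) := by
  obtain ⟨hp₁, hpN⟩ := hp
  have hr : 2 ≤ ENNReal.ofReal (p + 1) := by
    rw [← ENNReal.ofReal_ofNat]
    exact ENNReal.ofReal_le_ofReal (by linarith)
  obtain rfl | rfl | hN : N = 1 ∨ N = 2 ∨ 3 ≤ N := by omega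
  · exact .of_dim_one hr
  · exact .of_dim_two hr ofReal_ne_top
  · exact (SobolevInequality.of_three_le hN).of_le hr
      (ENNReal.ofReal_le_ofReal (by linarith [hpN hN]))

section Cutoff

open scoped NNReal

lemma exists_cutoff (E : Type*) [NormedAddCommGroup E] [NormedSpace ℝ E]
    [FiniteDimensional ℝ E] :
    ∃ (B : ℝ≥0) (χ : ℕ → E → ℝ), (∀ n, ContDiff ℝ 1 (χ n)) ∧ (∀ n, HasCompactSupport (χ n)) ∧
      (∀ n x, ‖χ n x‖ ≤ 1) ∧ (∀ n x, ‖fderiv ℝ (χ n) x‖ ≤ B) ∧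
      ∀ x, Filter.Tendsto (fun n => χ n x) Filter.atTop (nhds 1) := by
  let η : ContDiffBump (0 : E) := ⟨1, 2, one_pos, one_lt_two⟩
  have hη : ContDiff ℝ 1 η := η.contDiff
  obtain ⟨B, hB⟩ := (hη.continuous_fderiv one_ne_zero).bounded_above_of_compact_support
    (η.hasCompactSupport.fderiv ℝ)
  have hB₀ : 0 ≤ B := (norm_nonneg _).trans (hB 0)
  let c (n : ℕ) : ℝ := 1 / (n + 1)
  have hc (n : ℕ) : 0 < c n := Nat.one_div_pos_of_nat
  have hc₁ (n : ℕ) : c n ≤ 1 := (div_le_one (by positivity)).2 (by simp)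
  refine ⟨⟨B, hB₀⟩, fun n x => η (c n • x), fun n => hη.comp (contDiff_const_smul (c n)),
    fun n => η.hasCompactSupport.comp_homeomorph (.smulOfNeZero (c n) (hc n).ne'),
    fun n x => ?_, fun n x => ?_, fun x => ?_⟩
  · rw [Real.norm_of_nonneg η.nonneg]
    exact η.le_one
  · rw [fderiv_comp_smul, norm_smul, Real.norm_of_nonneg (hc n).le]
    exact (mul_le_of_le_one_left (norm_nonneg _) (hc₁ n)).trans (hB _)
  · have hx : Filter.Tendsto (fun n => c n • x) Filter.atTop (nhds 0) := by
      simpa [c] using (tendsto_one_div_add_atTop_nhds_zero_nat (𝕜 := ℝ)).smul_const x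
    have h := (hη.continuous.tendsto 0).comp hx
    rwa [η.one_of_mem_closedBall (by simp [η])] at h

lemma sobNorm_one_smul_le {N : ℕ} {G : Type} [NormedAddCommGroup G] [NormedSpace ℝ G]
    {χ : Rn N → ℝ} {u : Rn N → G} {B : ℝ≥0} (hχ : ContDiff ℝ 1 χ) (hu : ContDiff ℝ 1 u)
    (hχ₁ : ∀ x, ‖χ x‖ ≤ 1) (hχB : ∀ x, ‖fderiv ℝ χ x‖ ≤ B) :
    sobNorm 1 (fun x => χ x • u x) ≤ (1 + B) * sobNorm 1 u := by
  have hval : eLpNorm (fun x => χ x • u x) 2 volume ≤ eLpNorm u 2 volume :=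
    eLpNorm_mono fun x => by
      rw [norm_smul]
      exact mul_le_of_le_one_left (norm_nonneg _) (hχ₁ x)
  have hderiv (x) : ‖fderiv ℝ (fun y => χ y • u y) x‖ ≤ ‖fderiv ℝ u x‖ + ‖(B : ℝ) • u x‖ := by
    rw [fderiv_fun_smul (hχ.differentiable one_ne_zero x) (hu.differentiable one_ne_zero x)]
    refine (norm_add_le _ _).trans (add_le_add ?_ ?_)
    · rw [norm_smul]
      exact mul_le_of_le_one_left (norm_nonneg _) (hχ₁ x)
    · rw [ContinuousLinearMap.norm_smulRight_apply, norm_smul, NNReal.norm_eq]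
      gcongr
      exact hχB x
  have hgrad : eLpNorm (fderiv ℝ fun x => χ x • u x) 2 volume ≤
      eLpNorm (fderiv ℝ u) 2 volume + B * eLpNorm u 2 volume := by
    calc eLpNorm (fderiv ℝ fun x => χ x • u x) 2 volume
        ≤ eLpNorm ((fun x => ‖fderiv ℝ u x‖) + fun x => ‖((B : ℝ) • u) x‖) 2 volume :=
          eLpNorm_mono_real hderiv
      _ ≤ eLpNorm (fun x => ‖fderiv ℝ u x‖) 2 volume +
            eLpNorm (fun x => ‖((B : ℝ) • u) x‖) 2 volume :=
          eLpNorm_add_le (hu.continuous_fderiv one_ne_zero).norm.aestronglyMeasurable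
            (hu.continuous.const_smul (B : ℝ)).norm.aestronglyMeasurable one_le_two
      _ = eLpNorm (fderiv ℝ u) 2 volume + B * eLpNorm u 2 volume := by
          rw [eLpNorm_norm, eLpNorm_norm, eLpNorm_const_smul]
          simp
  simp only [sobNorm_one]
  calc _ ≤ eLpNorm u 2 volume + (eLpNorm (fderiv ℝ u) 2 volume + B * eLpNorm u 2 volume) :=
        add_le_add hval hgrad
    _ ≤ eLpNorm u 2 volume + (eLpNorm (fderiv ℝ u) 2 volume + B * eLpNorm u 2 volume) +
          B * eLpNorm (fderiv ℝ u) 2 volume := le_self_add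
    _ = (1 + B) * (eLpNorm u 2 volume + eLpNorm (fderiv ℝ u) 2 volume) := by ring

lemma SobolevInequality.exists_of_contDiff {N : ℕ} {r : ℝ≥0∞} (h : SobolevInequality N r) :
    ∃ K : ℝ≥0, ∀ u : Rn N → ℂ, ContDiff ℝ 1 u → eLpNorm u r volume ≤ K * sobNorm 1 u := by
  obtain ⟨K, hK⟩ := h
  obtain ⟨B, χ, hχ, hχc, hχ₁, hχB, hlim⟩ := exists_cutoff (Rn N)
  refine ⟨K * (1 + B), fun u hu => ?_⟩
  have hbound (n) : eLpNorm (fun x => χ n x • u x) r volume ≤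
      (K * (1 + B) : ℝ≥0) * sobNorm 1 u := by
    calc _ ≤ K * sobNorm 1 (fun x => χ n x • u x) :=
          hK _ ((hχ n).smul hu) (hχc n).smul_right
      _ ≤ K * ((1 + B) * sobNorm 1 u) := by
          gcongr
          exact sobNorm_one_smul_le (hχ n) hu (hχ₁ n) (hχB n)
      _ = (K * (1 + B) : ℝ≥0) * sobNorm 1 u := by push_cast; ring
  have hconv : ∀ᵐ x, Filter.Tendsto (fun n => χ n x • u x) Filter.atTop (nhds (u x)) :=
    .of_forall fun x => by simpa using (hlim x).smul_const (u x)
  exact (Lp.eLpNorm_lim_le_liminf_eLpNorm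
    (fun n => ((hχ n).smul hu).continuous.aestronglyMeasurable) u hconv).trans
    (Filter.liminf_le_of_frequently_le' (.of_forall hbound))

end Cutoff

section Nonlinearity

open scoped NNReal

lemma holderTriple_of_inv_add_two_mul_inv {s r r' : ℝ≥0∞} [HolderConjugate r r']
    (h : s⁻¹ + 2 * r⁻¹ = 1) : HolderTriple s r r' := by
  refine ⟨?_⟩
  have hr₀ : r⁻¹ ≠ ∞ := ENNReal.inv_ne_top.2 (HolderConjugate.ne_zero r r')
  rw [← ENNReal.add_right_inj hr₀, HolderConjugate.inv_add_inv_eq_one r r', ← h]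
  ring

lemma eLpNorm_norm_rpow_mul_norm_le {α E F : Type*} [MeasurableSpace α] [NormedAddCommGroup E]
    [NormedAddCommGroup F] {ν : Measure α} {a r : ℝ} (ha : 0 < a) (hr : 0 < r) {φ : α → E}
    {v : α → F} (hφ : AEStronglyMeasurable φ ν) (hv : AEStronglyMeasurable v ν) :
    eLpNorm (fun x => ‖φ x‖ ^ a * ‖v x‖) (ENNReal.ofReal (r / (a + 1))) ν ≤
      eLpNorm φ (ENNReal.ofReal r) ν ^ a * eLpNorm v (ENNReal.ofReal r) ν := by
  have : HolderTriple (ENNReal.ofReal (r / a)) (ENNReal.ofReal r)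
      (ENNReal.ofReal (r / (a + 1))) :=
    Real.HolderTriple.ennrealOfReal ⟨by field_simp, by positivity, hr⟩
  have h := eLpNorm_smul_le_mul_eLpNorm (p := ENNReal.ofReal (r / a)) (q := ENNReal.ofReal r)
    (r := ENNReal.ofReal (r / (a + 1))) hv.norm
    (hφ.norm.aemeasurable.pow_const a).aestronglyMeasurable
  rwa [eLpNorm_norm_rpow φ ha, ← ENNReal.ofReal_mul (by positivity), div_mul_cancel₀ _ ha.ne',
    eLpNorm_norm] at h

namespace H1bound

variable {p : ℝ} {f : ℂ → ℂ}

lemma exists_norm_fderiv_sub_le_of_le_two (hf : H1bound p f) (hp : p ≤ 2) :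
    ∃ C : ℝ≥0, ∀ a b, ‖fderiv ℝ f (a + b) - fderiv ℝ f a‖ ≤ C * ‖b‖ ^ (p - 1) := by
  obtain ⟨-, -, -, C, hC, -⟩ := hf
  refine ⟨C.toNNReal, fun a b => (hC hp (a + b) a).trans ?_⟩
  rw [add_sub_cancel_left]
  gcongr
  exact C.le_coe_toNNReal

lemma exists_norm_fderiv_sub_le_of_two_lt (hf : H1bound p f) (hp : 2 < p) :
    ∃ C : ℝ≥0, ∀ a b, ‖fderiv ℝ f (a + b) - fderiv ℝ f a‖ ≤
      C * (‖a‖ ^ (p - 2) * ‖b‖ + ‖b‖ ^ (p - 1)) := by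
  obtain ⟨-, -, -, C, -, hC⟩ := hf
  have hp₂ : 0 ≤ p - 2 := by linarith
  refine ⟨C.toNNReal * (2 ^ (p - 2) + 1), fun a b => ?_⟩
  have hsum : ‖a + b‖ ^ (p - 2) ≤ 2 ^ (p - 2) * (‖a‖ ^ (p - 2) + ‖b‖ ^ (p - 2)) := by
    calc ‖a + b‖ ^ (p - 2) ≤ (2 * max ‖a‖ ‖b‖) ^ (p - 2) := by
          gcongr
          linarith [norm_add_le a b, le_max_left ‖a‖ ‖b‖, le_max_right ‖a‖ ‖b‖]
      _ = 2 ^ (p - 2) * max (‖a‖ ^ (p - 2)) (‖b‖ ^ (p - 2)) := by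
          rw [Real.mul_rpow zero_le_two (by positivity),
            (Real.monotoneOn_rpow_Ici_of_exponent_nonneg hp₂).map_max (norm_nonneg a)
              (norm_nonneg b)]
      _ ≤ 2 ^ (p - 2) * (‖a‖ ^ (p - 2) + ‖b‖ ^ (p - 2)) := by
          gcongr
          exact max_le_add_of_nonneg (by positivity) (by positivity)
  have hpow : ‖b‖ ^ (p - 1) = ‖b‖ ^ (p - 2) * ‖b‖ := by
    rw [← Real.rpow_add_one' (norm_nonneg b) (by linarith)]
    ring_nf
  calc ‖fderiv ℝ f (a + b) - fderiv ℝ f a‖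
      ≤ C * (‖a + b‖ ^ (p - 2) + ‖a‖ ^ (p - 2)) * ‖b‖ := by
        simpa using hC hp (a + b) a
    _ ≤ C.toNNReal * ((2 ^ (p - 2) + 1) * (‖a‖ ^ (p - 2) + ‖b‖ ^ (p - 2))) * ‖b‖ := by
        gcongr
        · exact C.le_coe_toNNReal
        · linarith [Real.rpow_nonneg (norm_nonneg b) (p - 2)]
    _ = (C.toNNReal * (2 ^ (p - 2) + 1) : ℝ≥0) * (‖a‖ ^ (p - 2) * ‖b‖ + ‖b‖ ^ (p - 1)) := by
        rw [hpow]
        push_cast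
        ring

variable {α : Type*} [MeasurableSpace α] {ν : Measure α}

lemma exists_eLpNorm_fderiv_sub_le_of_le_two (hf : H1bound p f) (hp : 1 < p) (hp₂ : p ≤ 2)
    (φ : α → ℂ) :
    ∃ C : ℝ≥0, ∀ v : α → ℂ,
      eLpNorm (fun x => fderiv ℝ f (φ x + v x) - fderiv ℝ f (φ x))
          (ENNReal.ofReal ((p + 1) / (p - 1))) ν ≤
        C * eLpNorm v (ENNReal.ofReal (p + 1)) ν ^ (p - 1) := by
  have hp₁ : 0 < p - 1 := by linarith
  obtain ⟨C, hC⟩ := hf.exists_norm_fderiv_sub_le_of_le_two hp₂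
  refine ⟨C, fun v => ?_⟩
  calc _ ≤ C * eLpNorm (fun x => ‖v x‖ ^ (p - 1)) (ENNReal.ofReal ((p + 1) / (p - 1))) ν :=
        eLpNorm_le_nnreal_smul_eLpNorm_of_ae_le_mul (.of_forall fun x => by
          simpa [← NNReal.coe_le_coe, Real.abs_rpow_of_nonneg] using hC (φ x) (v x)) _
    _ = C * eLpNorm v (ENNReal.ofReal (p + 1)) ν ^ (p - 1) := by
        rw [eLpNorm_norm_rpow v hp₁, ← ENNReal.ofReal_mul (by positivity),
          div_mul_cancel₀ _ hp₁.ne']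

variable {φ : α → ℂ}

lemma exists_eLpNorm_fderiv_sub_le_of_two_lt (hf : H1bound p f) (hp : 2 < p)
    (hφ : MemLp φ (ENNReal.ofReal (p + 1)) ν) :
    ∃ C : ℝ≥0, ∀ v : α → ℂ, AEStronglyMeasurable v ν →
      eLpNorm (fun x => fderiv ℝ f (φ x + v x) - fderiv ℝ f (φ x))
          (ENNReal.ofReal ((p + 1) / (p - 1))) ν ≤
        C * (eLpNorm v (ENNReal.ofReal (p + 1)) ν +
          eLpNorm v (ENNReal.ofReal (p + 1)) ν ^ (p - 1)) := by
  have hp₁ : 0 < p - 1 := by linarith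
  have hp₂ : 0 < p - 2 := by linarith
  obtain ⟨C, hC⟩ := hf.exists_norm_fderiv_sub_le_of_two_lt hp
  set r := ENNReal.ofReal (p + 1)
  set s := ENNReal.ofReal ((p + 1) / (p - 1))
  have hs : 1 ≤ s := by
    rw [ENNReal.one_le_ofReal, one_le_div hp₁]
    linarith
  set Φ := eLpNorm φ r ν ^ (p - 2)
  have hΦt : Φ ≠ ∞ := ENNReal.rpow_ne_top_of_nonneg hp₂.le hφ.eLpNorm_ne_top
  refine ⟨C * (Φ.toNNReal + 1), fun v hv => ?_⟩
  set V := eLpNorm v r ν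
  have hφv : AEMeasurable (fun x => ‖φ x‖ ^ (p - 2) * ‖v x‖) ν :=
    (hφ.1.aemeasurable.norm.pow_const _).mul hv.aemeasurable.norm
  have hvp : AEMeasurable (fun x => ‖v x‖ ^ (p - 1)) ν := hv.aemeasurable.norm.pow_const _
  have hmul : eLpNorm (fun x => ‖φ x‖ ^ (p - 2) * ‖v x‖) s ν ≤ Φ * V := by
    have h := eLpNorm_norm_rpow_mul_norm_le hp₂ (by linarith : 0 < p + 1) hφ.1 hv
    rwa [show p - 2 + 1 = p - 1 by ring] at h
  have hpow : eLpNorm (fun x => ‖v x‖ ^ (p - 1)) s ν = V ^ (p - 1) := by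
    rw [eLpNorm_norm_rpow v hp₁, ← ENNReal.ofReal_mul (by positivity), div_mul_cancel₀ _ hp₁.ne']
  calc _ ≤ C * eLpNorm ((fun x => ‖φ x‖ ^ (p - 2) * ‖v x‖) + fun x => ‖v x‖ ^ (p - 1)) s ν :=
        eLpNorm_le_nnreal_smul_eLpNorm_of_ae_le_mul (.of_forall fun x => by
          rw [← NNReal.coe_le_coe]
          push_cast
          rw [Real.norm_of_nonneg (by simp only [Pi.add_apply]; positivity)]
          exact hC (φ x) (v x)) _
    _ ≤ C * (Φ * V + V ^ (p - 1)) := by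
        rw [← hpow]
        gcongr
        refine (eLpNorm_add_le hφv.aestronglyMeasurable hvp.aestronglyMeasurable hs).trans ?_
        gcongr
    _ ≤ (C * (Φ.toNNReal + 1) : ℝ≥0) * (V + V ^ (p - 1)) := by
        push_cast
        rw [ENNReal.coe_toNNReal hΦt, mul_assoc, add_one_mul, mul_add Φ]
        gcongr
        exacts [le_self_add, le_add_self]

lemma exists_eLpNorm_fderiv_sub_le (hf : H1bound p f) (hp : 1 < p)
    (hφ : MemLp φ (ENNReal.ofReal (p + 1)) ν) :
    ∃ C : ℝ≥0, ∀ v : α → ℂ, AEStronglyMeasurable v ν →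
      eLpNorm (fun x => fderiv ℝ f (φ x + v x) - fderiv ℝ f (φ x))
          (ENNReal.ofReal ((p + 1) / (p - 1))) ν ≤
        C * (eLpNorm v (ENNReal.ofReal (p + 1)) ν +
          eLpNorm v (ENNReal.ofReal (p + 1)) ν ^ (p - 1)) := by
  rcases le_or_gt p 2 with hp₂ | hp₂
  · obtain ⟨C, hC⟩ := hf.exists_eLpNorm_fderiv_sub_le_of_le_two (ν := ν) hp hp₂ φ
    exact ⟨C, fun v _ => (hC v).trans (by gcongr; exact le_add_self)⟩
  · exact hf.exists_eLpNorm_fderiv_sub_le_of_two_lt hp₂ hφ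

lemma exists_eLpNorm_fderiv_sub_apply_le (hf : H1bound p f) (hp : 1 < p)
    (hφ : MemLp φ (ENNReal.ofReal (p + 1)) ν) (r' : ℝ≥0∞)
    [HolderConjugate (ENNReal.ofReal (p + 1)) r'] :
    ∃ C : ℝ≥0, ∀ v w : α → ℂ, AEStronglyMeasurable v ν → AEStronglyMeasurable w ν →
      eLpNorm (fun x => (fderiv ℝ f (φ x + v x) - fderiv ℝ f (φ x)) (w x)) r' ν ≤
        C * (eLpNorm v (ENNReal.ofReal (p + 1)) ν +
          eLpNorm v (ENNReal.ofReal (p + 1)) ν ^ (p - 1)) *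
            eLpNorm w (ENNReal.ofReal (p + 1)) ν := by
  obtain ⟨C, hC⟩ := hf.exists_eLpNorm_fderiv_sub_le hp hφ
  have : HolderTriple (ENNReal.ofReal ((p + 1) / (p - 1))) (ENNReal.ofReal (p + 1)) r' := by
    apply holderTriple_of_inv_add_two_mul_inv
    have hp₁ : 0 < p - 1 := by linarith
    rw [← ENNReal.ofReal_inv_of_pos (div_pos (by positivity) hp₁),
      ← ENNReal.ofReal_inv_of_pos (by positivity),
      ← ENNReal.ofReal_ofNat, ← ENNReal.ofReal_mul zero_le_two,
      ← ENNReal.ofReal_add (by positivity) (by positivity), ENNReal.ofReal_eq_one]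
    field_simp
    ring
  have hDf : Continuous (fderiv ℝ f) := hf.1.continuous_fderiv one_ne_zero
  refine ⟨C, fun v w hv hw => ?_⟩
  refine (eLpNorm_le_eLpNorm_mul_eLpNorm_of_nnnorm (p := ENNReal.ofReal ((p + 1) / (p - 1)))
    (q := ENNReal.ofReal (p + 1)) ((hDf.comp_aestronglyMeasurable (hφ.1.add hv)).sub
      (hDf.comp_aestronglyMeasurable hφ.1)) hw (fun L z => L z) 1
    (.of_forall fun x => by
      simpa using (fderiv ℝ f (φ x + v x) - fderiv ℝ f (φ x)).le_opNNNorm (w x))).trans ?_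
  rw [ENNReal.coe_one, one_mul]
  gcongr
  exact hC v hv

end H1bound

end Nonlinearity

section TimeWeights

/-- The exponential weight `e^{cτ}` as an extended nonnegative real. The weighted norms on `(0, T)`
are `L^q` norms against this weight evaluated at the remaining time `τ = T - t`. -/
noncomputable def expWeight (c τ : ℝ) : ℝ≥0∞ :=
  ENNReal.ofReal (Real.exp (c * τ))

namespace expWeight

variable {a c d τ : ℝ}

lemma ne_top : expWeight c τ ≠ ∞ := ENNReal.ofReal_ne_top

lemma add : expWeight (c + d) τ = expWeight c τ * expWeight d τ := by
  rw [expWeight, expWeight, expWeight, ← ENNReal.ofReal_mul (Real.exp_nonneg _), ← Real.exp_add,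
    add_mul]

lemma neg_mul_self : expWeight (-c) τ * expWeight c τ = 1 := by
  rw [← add, neg_add_cancel, expWeight, zero_mul, Real.exp_zero, ENNReal.ofReal_one]

lemma rpow : expWeight c τ ^ a = expWeight (c * a) τ := by
  rw [expWeight, expWeight, ENNReal.ofReal_rpow_of_pos (Real.exp_pos _), ← Real.exp_mul,
    mul_right_comm]

lemma mono (hcd : c ≤ d) (hτ : 0 ≤ τ) : expWeight c τ ≤ expWeight d τ := by
  unfold expWeight
  gcongr

lemma sub_eq (c T t : ℝ) : expWeight c (T - t) =
    ENNReal.ofReal (Real.exp (c * T)) * ENNReal.ofReal (Real.exp (-(c * t))) := by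
  rw [expWeight, ← ENNReal.ofReal_mul (Real.exp_nonneg _), ← Real.exp_add, mul_sub, sub_eq_add_neg]

lemma measurable_sub (c T : ℝ) : Measurable fun t => expWeight c (T - t) := by
  unfold expWeight
  fun_prop

end expWeight

lemma setLIntegral_expWeight_neg_le {κ : ℝ} (hκ : 0 < κ) (T : ℝ) :
    ∫⁻ t in Set.Ioo 0 T, expWeight (-κ) (T - t) ≤ ENNReal.ofReal κ⁻¹ := by
  have hexp (t : ℝ) : Real.exp (-κ * (T - t)) = Real.exp (-κ * T) * Real.exp (κ * t) := by
    rw [← Real.exp_add]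
    ring_nf
  calc ∫⁻ t in Set.Ioo 0 T, expWeight (-κ) (T - t)
      ≤ ∫⁻ t in Set.Iic T, expWeight (-κ) (T - t) := lintegral_mono_set fun t ht => ht.2.le
    _ = ENNReal.ofReal (∫ t in Set.Iic T, Real.exp (-κ * T) * Real.exp (κ * t)) := by
        simp only [expWeight, hexp]
        exact (ofReal_integral_eq_lintegral_ofReal ((integrableOn_exp_mul_Iic hκ T).const_mul _)
          (.of_forall fun t => by positivity)).symm
    _ = ENNReal.ofReal κ⁻¹ := by
        rw [integral_const_mul, integral_exp_mul_Iic hκ, ← mul_div_assoc, ← Real.exp_add]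
        simp

lemma eLpNorm_expWeight_neg_le {κ : ℝ} (hκ : 0 < κ) {s : ℝ≥0∞} (hs : 1 ≤ s) (T : ℝ) :
    eLpNorm (fun t => expWeight (-κ) (T - t)) s (volume.restrict (Set.Ioo 0 T)) ≤
      ENNReal.ofReal (max κ⁻¹ 1) := by
  have henorm (t : ℝ) : ‖Real.exp (-κ * (T - t))‖ₑ = expWeight (-κ) (T - t) :=
    Real.enorm_of_nonneg (Real.exp_nonneg _)
  have hmeas : Continuous fun t => Real.exp (-κ * (T - t)) := by fun_prop
  have h := eLpNorm_le_max_eLpNorm (ν := volume.restrict (Set.Ioo 0 T)) (q := ∞)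
    hmeas.aestronglyMeasurable one_ne_zero hs le_top
  rw [← eLpNorm_enorm fun t => Real.exp (-κ * (T - t)), eLpNorm_one_eq_lintegral_enorm] at h
  simp only [henorm] at h
  rw [ENNReal.ofReal_max, ENNReal.ofReal_one]
  refine h.trans (max_le_max (setLIntegral_expWeight_neg_le hκ T) ?_)
  refine eLpNormEssSup_le_of_ae_enorm_bound ?_
  filter_upwards [ae_restrict_mem measurableSet_Ioo] with t ht
  rw [henorm, expWeight, ENNReal.ofReal_le_one, Real.exp_le_one_iff]
  nlinarith [ht.2]

lemma eLpNorm_expWeight_neg_mul_le {κ : ℝ} (hκ : 0 < κ) {q q' : ℝ≥0∞} [HolderConjugate q q']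
    (hq : 2 ≤ q) (T : ℝ) (b : ℝ → ℝ≥0∞) :
    eLpNorm (fun t => expWeight (-κ) (T - t) * b t) q' (volume.restrict (Set.Ioo 0 T)) ≤
      ENNReal.ofReal (max κ⁻¹ 1) * eLpNorm b q (volume.restrict (Set.Ioo 0 T)) := by
  have hq₂ : 2 * q⁻¹ ≤ 1 := by
    rw [← div_eq_mul_inv]
    exact ENNReal.div_le_of_le_mul (by rwa [one_mul])
  have : HolderTriple (1 - 2 * q⁻¹)⁻¹ q q' :=
    holderTriple_of_inv_add_two_mul_inv (by rw [inv_inv, tsub_add_cancel_of_le hq₂])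
  refine (eLpNorm_mul_le_eLpNorm_mul_eLpNorm (p := (1 - 2 * q⁻¹)⁻¹) (q := q)
    (expWeight.measurable_sub _ T).aemeasurable (fun t => expWeight.ne_top) b).trans ?_
  gcongr
  exact eLpNorm_expWeight_neg_le hκ (ENNReal.one_le_inv.2 tsub_le_self) T

lemma timeLp_eq_eLpNorm {q : ℝ≥0∞} (hq : q ≠ 0) (T : ℝ) (Φ : ℝ → ℝ≥0∞) :
    timeLp q T Φ = eLpNorm Φ q (volume.restrict (Set.Ioo 0 T)) := by
  rw [timeLp]
  split_ifs with hqt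
  · rw [hqt]
    rfl
  · exact (eLpNorm_eq_lintegral_rpow_enorm_toReal (f := Φ) hq hqt).symm

variable {N : ℕ} {G : Type} [NormedAddCommGroup G]

lemma wNorm_eq_eLpNorm {q : ℝ≥0∞} (hq : q ≠ 0) (r : ℝ≥0∞) (lam T : ℝ) (f : ℝ → Rn N → G) :
    wNorm q r lam T f = eLpNorm (fun t => expWeight lam (T - t) * eLpNorm (f t) r volume) q
      (volume.restrict (Set.Ioo 0 T)) := by
  rw [wNorm, twNorm, timeLp_eq_eLpNorm hq, ← eLpNorm_const_mul_ennreal ENNReal.ofReal_ne_top]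
  simp only [expWeight.sub_eq, mul_assoc]

lemma ae_sobNorm_le_expWeight_mul_wNormH2 [NormedSpace ℝ G] (lam T : ℝ) (f : ℝ → Rn N → G) :
    ∀ᵐ t ∂volume.restrict (Set.Ioo 0 T),
      sobNorm 2 (f t) ≤ expWeight (-lam) (T - t) * wNormH2 lam T f := by
  filter_upwards [ENNReal.ae_le_essSup
    fun t => ENNReal.ofReal (Real.exp (-(lam * t))) * sobNorm 2 (f t)] with t ht
  calc sobNorm 2 (f t) = expWeight (-lam) (T - t) * (expWeight lam (T - t) * sobNorm 2 (f t)) := by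
        rw [← mul_assoc, expWeight.neg_mul_self, one_mul]
    _ ≤ expWeight (-lam) (T - t) * wNormH2 lam T f := by
        rw [expWeight.sub_eq lam, mul_assoc (ENNReal.ofReal _), wNormH2]
        gcongr

end TimeWeights

section Estimate

open scoped NNReal

lemma measurable_tderiv {N : ℕ} {v : ℝ → Rn N → ℂ} (hv : ∀ t, Measurable (v t))
    (hd : ∀ t x, DifferentiableAt ℝ (fun s => v s x) t) (t : ℝ) : Measurable (tderiv v t) := by
  have hlim : Filter.Tendsto (fun n : ℕ => 1 / ((n : ℝ) + 1)) Filter.atTop (nhdsWithin 0 {0}ᶜ) :=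
    tendsto_nhdsWithin_iff.2 ⟨tendsto_one_div_add_atTop_nhds_zero_nat,
      .of_forall fun n => Nat.one_div_pos_of_nat.ne'⟩
  exact measurable_of_tendsto_metrizable (fun n => ((hv _).sub (hv t)).const_smul _)
    (tendsto_pi_nhds.2 fun x => (hd t x).hasDerivAt.tendsto_slope_zero.comp hlim)

variable {N : ℕ} {p : ℝ} {f : ℂ → ℂ} {φ : Rn N → ℂ}

lemma H1bound.exists_eLpNorm_hderiv_le (hf : H1bound p f) (hN : 1 ≤ N) (hp : Subcrit N p)
    (hφ : MemSobolev 1 φ) (r' : ℝ≥0∞) [HolderConjugate (ENNReal.ofReal (p + 1)) r'] :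
    ∃ C : ℝ≥0, ∀ v : ℝ → Rn N → ℂ, (∀ t, ContDiff ℝ 1 (v t)) →
      (∀ t x, DifferentiableAt ℝ (fun s => v s x) t) → ∀ t,
        eLpNorm (hderiv f φ v t) r' volume ≤
          C * (sobNorm 1 (v t) + sobNorm 1 (v t) ^ (p - 1)) *
            eLpNorm (tderiv v t) (ENNReal.ofReal (p + 1)) volume := by
  have hp₁ : 0 ≤ p - 1 := by linarith [hp.1]
  obtain ⟨K, hK⟩ := (hp.sobolevInequality hN).exists_of_contDiff
  have hφL : MemLp φ (ENNReal.ofReal (p + 1)) volume :=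
    ⟨hφ.1.continuous.aestronglyMeasurable, (hK φ hφ.1).trans_lt
      (ENNReal.mul_lt_top ENNReal.coe_lt_top hφ.sobNorm_ne_top.lt_top)⟩
  obtain ⟨C, hC⟩ := hf.exists_eLpNorm_fderiv_sub_apply_le hp.1 hφL r'
  refine ⟨C * (K + K ^ (p - 1)), fun v hv hd t => ?_⟩
  set S := sobNorm 1 (v t)
  have hS : eLpNorm (v t) (ENNReal.ofReal (p + 1)) volume ≤ K * S := hK (v t) (hv t)
  calc eLpNorm (hderiv f φ v t) r' volume
      = eLpNorm (fun x => (fderiv ℝ f (φ x + v t x) - fderiv ℝ f (φ x)) (tderiv v t x)) r'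
          volume := eLpNorm_congr_norm_ae (.of_forall fun x => by simp [hderiv])
    _ ≤ C * (K * S + (K * S) ^ (p - 1)) * eLpNorm (tderiv v t) (ENNReal.ofReal (p + 1)) volume := by
        refine (hC (v t) (tderiv v t) (hv t).continuous.aestronglyMeasurable
          (measurable_tderiv (fun s => (hv s).continuous.measurable)
            hd t).aestronglyMeasurable).trans ?_
        gcongr
    _ ≤ (C * (K + K ^ (p - 1)) : ℝ≥0) * (S + S ^ (p - 1)) *
          eLpNorm (tderiv v t) (ENNReal.ofReal (p + 1)) volume := by
        rw [ENNReal.mul_rpow_of_nonneg _ _ hp₁]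
        push_cast [ENNReal.coe_rpow_of_nonneg _ hp₁]
        rw [mul_assoc (C : ℝ≥0∞) (K + _), add_mul (K : ℝ≥0∞)]
        gcongr
        exacts [le_self_add, le_add_self]

/- This is where `μ < 2λ` and `μ < pλ` enter: `v` decays like `e^{-λτ}` and `v^{p-1}` like
`e^{-(p-1)λτ}`, and either of them times the decay `e^{-λτ}` of `∂ₜv` beats the growth `e^{μτ}`. -/
lemma expWeight_mul_add_rpow_le {p lam μ κ τ : ℝ} {S X : ℝ≥0∞} (hp : 1 ≤ p) (h₂ : κ + μ ≤ 2 * lam)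
    (hp' : κ + μ ≤ p * lam) (hτ : 0 ≤ τ) (hS : S ≤ expWeight (-lam) τ * X) :
    expWeight μ τ * (S + S ^ (p - 1)) ≤
      expWeight (-κ) τ * ((X + X ^ (p - 1)) * expWeight lam τ) := by
  have hp₁ : 0 ≤ p - 1 := by linarith
  calc expWeight μ τ * (S + S ^ (p - 1))
      ≤ expWeight μ τ * (expWeight (-lam) τ * X + (expWeight (-lam) τ * X) ^ (p - 1)) := by gcongr
    _ = expWeight (μ + -lam) τ * X + expWeight (μ + -lam * (p - 1)) τ * X ^ (p - 1) := by
        rw [ENNReal.mul_rpow_of_nonneg _ _ hp₁, expWeight.rpow, mul_add, ← mul_assoc, ← mul_assoc,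
          ← expWeight.add, ← expWeight.add]
    _ ≤ expWeight (-κ + lam) τ * X + expWeight (-κ + lam) τ * X ^ (p - 1) := by
        gcongr <;> exact expWeight.mono (by linarith) hτ
    _ = expWeight (-κ) τ * ((X + X ^ (p - 1)) * expWeight lam τ) := by
        rw [expWeight.add]
        ring

lemma ae_expWeight_mul_eLpNorm_le {E F G : Type} [NormedAddCommGroup E] [NormedSpace ℝ E]
    [NormedAddCommGroup F] [NormedAddCommGroup G] {v : ℝ → Rn N → E} {h : ℝ → Rn N → F}
    {w : ℝ → Rn N → G} {lam μ κ T : ℝ} {r r' C X : ℝ≥0∞} (hp : 1 ≤ p) (h₂ : κ + μ ≤ 2 * lam)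
    (hp' : κ + μ ≤ p * lam) (hv : wNormH2 lam T v ≤ X)
    (hh : ∀ t, eLpNorm (h t) r' volume ≤
      C * (sobNorm 1 (v t) + sobNorm 1 (v t) ^ (p - 1)) * eLpNorm (w t) r volume) :
    ∀ᵐ t ∂volume.restrict (Set.Ioo 0 T), expWeight μ (T - t) * eLpNorm (h t) r' volume ≤
      C * (X + X ^ (p - 1)) *
        (expWeight (-κ) (T - t) * (expWeight lam (T - t) * eLpNorm (w t) r volume)) := by
  filter_upwards [ae_sobNorm_le_expWeight_mul_wNormH2 lam T v, ae_restrict_mem measurableSet_Ioo]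
    with t hvt ht
  set S := sobNorm 1 (v t)
  have hS : S ≤ expWeight (-lam) (T - t) * X :=
    (sobNorm_mono (v t) one_le_two).trans (hvt.trans (by gcongr))
  calc _ ≤ expWeight μ (T - t) * (C * (S + S ^ (p - 1)) * eLpNorm (w t) r volume) := by
        gcongr
        exact hh t
    _ = C * (expWeight μ (T - t) * (S + S ^ (p - 1))) * eLpNorm (w t) r volume := by ring
    _ ≤ C * (expWeight (-κ) (T - t) * ((X + X ^ (p - 1)) * expWeight lam (T - t))) *
          eLpNorm (w t) r volume := by
        gcongr C * ?_ * _
        exact expWeight_mul_add_rpow_le hp h₂ hp' (sub_nonneg.2 ht.2.le) hS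
    _ = _ := by ring

lemma H1bound.exists_wNorm_hderiv_le (hf : H1bound p f) (hN : 1 ≤ N) (hp : Subcrit N p)
    (hφ : MemSobolev 1 φ) {lam μ : ℝ} (hμ₂ : μ < 2 * lam) (hμp : μ < p * lam) {q q' r' : ℝ≥0∞}
    (hq : 2 ≤ q) [HolderConjugate q q'] [HolderConjugate (ENNReal.ofReal (p + 1)) r'] :
    ∃ C : ℝ≥0, ∀ (v : ℝ → Rn N → ℂ) (T : ℝ) (X : ℝ≥0∞), (∀ t, ContDiff ℝ 1 (v t)) →
      (∀ t x, DifferentiableAt ℝ (fun s => v s x) t) → X ≠ ∞ → wNormH2 lam T v ≤ X →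
        wNorm q (ENNReal.ofReal (p + 1)) lam T (tderiv v) ≤ X →
          wNorm q' r' μ T (hderiv f φ v) ≤ C * (X ^ (2 : ℝ) + X ^ p) := by
  obtain ⟨C, hC⟩ := hf.exists_eLpNorm_hderiv_le hN hp hφ r'
  set κ := min (2 * lam) (p * lam) - μ
  have hκ : 0 < κ := sub_pos.2 (lt_min hμ₂ hμp)
  have hκ₂ : κ + μ ≤ 2 * lam := by simp [κ]
  have hκp : κ + μ ≤ p * lam := by simp [κ]
  refine ⟨C * (max κ⁻¹ 1).toNNReal, fun v T X hv hd hXt hH2 hLq => ?_⟩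
  set D := C * (X + X ^ (p - 1))
  have hDt : D ≠ ∞ := ENNReal.mul_ne_top ENNReal.coe_ne_top <| ENNReal.add_ne_top.2
    ⟨hXt, ENNReal.rpow_ne_top_of_nonneg (by linarith [hp.1]) hXt⟩
  set b := fun t => expWeight lam (T - t) * eLpNorm (tderiv v t) (ENNReal.ofReal (p + 1)) volume
  rw [wNorm_eq_eLpNorm (by positivity)] at hLq
  calc wNorm q' r' μ T (hderiv f φ v)
      ≤ eLpNorm (fun t => D * (expWeight (-κ) (T - t) * b t)) q'
          (volume.restrict (Set.Ioo 0 T)) := by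
        rw [wNorm_eq_eLpNorm (HolderConjugate.ne_zero q' q)]
        exact eLpNorm_mono_enorm_ae
          (ae_expWeight_mul_eLpNorm_le hp.1.le hκ₂ hκp hH2 fun t => hC v hv hd t)
    _ ≤ D * (ENNReal.ofReal (max κ⁻¹ 1) * X) := by
        rw [eLpNorm_const_mul_ennreal hDt]
        gcongr
        exact (eLpNorm_expWeight_neg_mul_le hκ hq T b).trans (by gcongr)
    _ = (C * (max κ⁻¹ 1).toNNReal : ℝ≥0) * (X ^ (2 : ℝ) + X ^ p) := by
        have hXp : X ^ p = X ^ (p - 1) * X := by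
          simpa using ENNReal.rpow_add_of_nonneg (x := X) _ _ (sub_nonneg.2 hp.1.le) zero_le_one
        rw [hXp, ENNReal.rpow_two, ENNReal.ofReal]
        push_cast
        ring

end Estimate

section MainTheorem

lemma Admissible.two_le {N : ℕ} {q r : ℝ≥0∞} (h : Admissible N q r) : 2 ≤ q := by
  obtain ⟨-, hq, hr, -⟩ := h
  suffices 2 / q ≤ 1 by
    rcases eq_or_ne q ∞ with rfl | hqt
    · exact le_top
    rwa [ENNReal.div_le_iff_le_mul (.inr one_ne_top) (.inl hqt), one_mul] at this
  rw [hq]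
  rcases le_or_gt N 2 with hN | hN
  · calc (N : ℝ≥0∞) * (1 / 2 - 1 / r) ≤ 2 * (1 / 2) := by
          gcongr
          · exact_mod_cast hN
          · exact tsub_le_self
      _ = 1 := ENNReal.mul_div_cancel two_ne_zero ofNat_ne_top
  have hN₀ : (N : ℝ≥0∞) ≠ 0 := Nat.cast_ne_zero.2 (by omega)
  have hN₂ : (2 : ℝ≥0∞) ≤ N := by exact_mod_cast hN.le
  calc (N : ℝ≥0∞) * (1 / 2 - 1 / r) ≤ N * (1 / N) := by
        gcongr
        rw [tsub_le_iff_right]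
        calc (1 / 2 : ℝ≥0∞) = (2 * 1 + (N - 2)) / (2 * N) := by
              rw [mul_one, add_tsub_cancel_of_le hN₂,
                ← ENNReal.mul_div_mul_right 1 2 hN₀ (natCast_ne_top N), one_mul]
          _ = 1 / N + (2 * N / (N - 2) : ℝ≥0∞)⁻¹ := by
              rw [ENNReal.add_div, ENNReal.mul_div_mul_left 1 _ two_ne_zero ofNat_ne_top,
                ENNReal.inv_div (by simp) (by simp [hN₀])]
          _ ≤ 1 / N + 1 / r := by
              rw [one_div r]
              gcongr
              exact hr hN
    _ = 1 := ENNReal.mul_div_cancel hN₀ (natCast_ne_top N)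

lemma one_add_alphaConst_mul_le {p₁ p₂ lam : ℝ} (hlam : 0 ≤ lam) :
    (1 + alphaConst (p₁ + 1) (p₂ + 1)) * lam ≤ min (2 * lam) (min (p₁ * lam) (p₂ * lam)) := by
  simp only [le_min_iff, alphaConst]
  refine ⟨?_, ?_, ?_⟩ <;> gcongr
  · linarith [min_le_left 1 (min (p₁ + 1 - 2) (p₂ + 1 - 2))]
  · linarith [min_le_right 1 (min (p₁ + 1 - 2) (p₂ + 1 - 2)),
      min_le_left (p₁ + 1 - 2) (p₂ + 1 - 2)]
  · linarith [min_le_right 1 (min (p₁ + 1 - 2) (p₂ + 1 - 2)),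
      min_le_right (p₁ + 1 - 2) (p₂ + 1 - 2)]

theorem weighted_nonlinear_time_derivative_estimate_general
    {N : ℕ} (hN : 1 ≤ N) {f₁ f₂ : ℂ → ℂ} {p₁ p₂ : ℝ} {φ : Rn N → ℂ} (hp₁ : Subcrit N p₁)
    (hp₂ : Subcrit N p₂) (hf₁ : H1bound p₁ f₁) (hf₂ : H1bound p₂ f₂) (hφ : MemSobolev 1 φ)
    {lam μ : ℝ} (hμ : μ < min (2 * lam) (min (p₁ * lam) (p₂ * lam)))
    {q₁ q₂ q₁' r₁' q₂' r₂' : ℝ≥0∞} (hq₁ : 2 ≤ q₁) (hq₂ : 2 ≤ q₂)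
    (hq₁' : 1 / q₁ + 1 / q₁' = 1) (hr₁' : 1 / ENNReal.ofReal (p₁ + 1) + 1 / r₁' = 1)
    (hq₂' : 1 / q₂ + 1 / q₂' = 1) (hr₂' : 1 / ENNReal.ofReal (p₂ + 1) + 1 / r₂' = 1) :
    ∃ C : ℝ, 0 < C ∧
      ∀ (v : ℝ → Rn N → ℂ) (T : ℝ), (∀ t, ContDiff ℝ 1 (v t)) →
        (∀ t x, DifferentiableAt ℝ (fun s => v s x) t) →
        (wNorm q₁' r₁' μ T (hderiv f₁ φ v) ≤
          ENNReal.ofReal C *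
            (XNorm q₁ (ENNReal.ofReal (p₁ + 1)) q₂ (ENNReal.ofReal (p₂ + 1)) lam T v
                ^ (2 : ℝ) +
              XNorm q₁ (ENNReal.ofReal (p₁ + 1)) q₂ (ENNReal.ofReal (p₂ + 1)) lam T v ^ p₁)) ∧
        (wNorm q₂' r₂' μ T (hderiv f₂ φ v) ≤
          ENNReal.ofReal C *
            (XNorm q₁ (ENNReal.ofReal (p₁ + 1)) q₂ (ENNReal.ofReal (p₂ + 1)) lam T v
                ^ (2 : ℝ) +
              XNorm q₁ (ENNReal.ofReal (p₁ + 1)) q₂ (ENNReal.ofReal (p₂ + 1)) lam T v ^ p₂)) := by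
  obtain ⟨hμ₂, hμ₁', hμ₂'⟩ : μ < 2 * lam ∧ μ < p₁ * lam ∧ μ < p₂ * lam := by simpa using hμ
  have : HolderConjugate q₁ q₁' := ⟨by simpa using hq₁'⟩
  have : HolderConjugate q₂ q₂' := ⟨by simpa using hq₂'⟩
  have : HolderConjugate (ENNReal.ofReal (p₁ + 1)) r₁' := ⟨by simpa using hr₁'⟩
  have : HolderConjugate (ENNReal.ofReal (p₂ + 1)) r₂' := ⟨by simpa using hr₂'⟩
  obtain ⟨C₁, hC₁⟩ := hf₁.exists_wNorm_hderiv_le (q' := q₁') (r' := r₁') hN hp₁ hφ hμ₂ hμ₁' hq₁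
  obtain ⟨C₂, hC₂⟩ := hf₂.exists_wNorm_hderiv_le (q' := q₂') (r' := r₂') hN hp₂ hφ hμ₂ hμ₂' hq₂
  have hC : ENNReal.ofReal (C₁ + C₂ + 1) = C₁ + C₂ + 1 := by
    exact_mod_cast ENNReal.ofReal_coe_nnreal (p := C₁ + C₂ + 1)
  refine ⟨C₁ + C₂ + 1, by positivity, fun v T hv hd => ?_⟩
  set X := XNorm q₁ (ENNReal.ofReal (p₁ + 1)) q₂ (ENNReal.ofReal (p₂ + 1)) lam T v
  have hX₀ : wNormH2 lam T v ≤ X := le_self_add.trans le_self_add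
  have hX₁ : wNorm q₁ (ENNReal.ofReal (p₁ + 1)) lam T (tderiv v) ≤ X :=
    le_add_self.trans le_self_add
  have hX₂ : wNorm q₂ (ENNReal.ofReal (p₂ + 1)) lam T (tderiv v) ≤ X := le_add_self
  rw [hC]
  rcases eq_or_ne X ∞ with hXt | hXt
  · simp [hXt, ENNReal.mul_top]
  · constructor
    · refine (hC₁ v T X hv hd hXt hX₀ hX₁).trans ?_
      gcongr
      exact le_self_add.trans le_self_add
    · refine (hC₂ v T X hv hd hXt hX₀ hX₂).trans ?_
      gcongr
      exact le_add_self.trans le_self_add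

end MainTheorem

noncomputable section

/-- Lemma 3.5: ‖∂ₜh_j(v)‖_{L^{q_j',μ}_T L^{r_j'}} ≤ C(‖v‖_{X_T}² + ‖v‖_{X_T}^{r_j-1}),
where ∂ₜh_j(v) = J[Df_j(φ+v) - Df_j(φ)]∂ₜv. -/
theorem weighted_nonlinear_time_derivative_estimate
    {N : ℕ} (hN : 1 ≤ N) (g : ℝ → ℝ) (f₁ f₂ : ℂ → ℂ) (p₁ p₂ ω : ℝ)
    (φ : Rn N → ℂ)
    (h1 : H1full N g f₁ f₂ p₁ p₂) (h2 : H2hyp ω g φ) (h3 : H3hyp g ω φ)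
    (lamstar : ℂ) (hstar : 0 < lamstar.re ∧ IsEigen g ω φ lamstar)
    (hmax : ∀ z : ℂ, IsEigen g ω φ z → z.re ≤ lamstar.re)
    (ν lam μ : ℝ)
    (hchain : 0 < lam ∧ lam < lamstar.re ∧ lamstar.re < ν ∧ ν < μ ∧
      μ < (1 + alphaConst (p₁ + 1) (p₂ + 1)) * lam)
    (q₁ q₂ q₁' r₁' q₂' r₂' : ℝ≥0∞)
    (hadm1 : Admissible N q₁ (ENNReal.ofReal (p₁ + 1)))
    (hadm2 : Admissible N q₂ (ENNReal.ofReal (p₂ + 1)))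
    (hq₁' : 1 / q₁ + 1 / q₁' = 1) (hr₁' : 1 / ENNReal.ofReal (p₁ + 1) + 1 / r₁' = 1)
    (hq₂' : 1 / q₂ + 1 / q₂' = 1) (hr₂' : 1 / ENNReal.ofReal (p₂ + 1) + 1 / r₂' = 1) :
    ∃ C : ℝ, 0 < C ∧
      ∀ (v : ℝ → Rn N → ℂ) (T : ℝ), 0 < T → (∀ t, MemSobolev 2 (v t)) →
        (∀ t x, DifferentiableAt ℝ (fun s => v s x) t) →
        (wNorm q₁' r₁' μ T (hderiv f₁ φ v) ≤
          ENNReal.ofReal C *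
            (XNorm q₁ (ENNReal.ofReal (p₁ + 1)) q₂ (ENNReal.ofReal (p₂ + 1)) lam T v
                ^ (2 : ℝ) +
              XNorm q₁ (ENNReal.ofReal (p₁ + 1)) q₂ (ENNReal.ofReal (p₂ + 1)) lam T v
                ^ (p₁ + 1 - 1))) ∧
        (wNorm q₂' r₂' μ T (hderiv f₂ φ v) ≤
          ENNReal.ofReal C *
            (XNorm q₁ (ENNReal.ofReal (p₁ + 1)) q₂ (ENNReal.ofReal (p₂ + 1)) lam T v
                ^ (2 : ℝ) +
              XNorm q₁ (ENNReal.ofReal (p₁ + 1)) q₂ (ENNReal.ofReal (p₂ + 1)) lam T v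
                ^ (p₂ + 1 - 1))) := by
  obtain ⟨C, hC, h⟩ := weighted_nonlinear_time_derivative_estimate_general hN h1.sub1 h1.sub2
    h1.bd1 h1.bd2 h2.2.2.1 (hchain.2.2.2.2.trans_le (one_add_alphaConst_mul_le hchain.1.le))
    hadm1.two_le hadm2.two_le hq₁' hr₁' hq₂' hr₂'
  simp only [add_sub_cancel_right]
  exact ⟨C, hC, fun v T _ hv => h v T fun t => (hv t).1.of_le (by norm_num)⟩

end
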